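/- arXiv:2407.02780 — 2 statements merged into one kernel-verified Lean document; each statement's English description precedes it below -/
import Mathlib

section
/- There exists a (−(r+1))-eigenfunction of the unitary polar graph U(4,q) whose support has cardinality exactly 2(r+1). -/
/-!
Let `T` be the set of `t ∈ F` with `t ^ (r + 1) = -1`. Since `X ^ (r + 1) + 1` divides the
separable split polynomial `X ^ q - X`, it has exactly `r + 1` elements (`card_normRoots`).
The points `⟨(1, t, 0, 0)⟩` and `⟨(0, 0, 1, t)⟩`, for `t ∈ T`, are the isotropic points of two
mutually orthogonal hyperbolic lines. The eigenfunction is `1` on the points of the first line,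
`-1` on the points of the second, and `0` elsewhere.

A vertex `⟨v⟩` is orthogonal to `⟨(1, t, 0, 0)⟩` iff `v₁ = t v₀`, and to `⟨(0, 0, 1, t)⟩` iff
`v₃ = t v₂` (`orthogonal_iff`). Since `v` is isotropic, `v₀ ^ (r+1) + v₁ ^ (r+1)` and
`v₂ ^ (r+1) + v₃ ^ (r+1)` vanish together, so counting the `t ∈ T` with `b = t a`
(`count_zero`, `count_one`, `count_none`) shows that a vertex off the two lines has equally many
neighbours (one or none) on each of them, whereas a vertex on one of the lines is adjacent to
exactly the `r + 1` points of the other.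
-/

open Module

/-- The Hermitian form `H(u,v) = ∑ᵢ uᵢ vᵢ^r` on `F^4`. -/
def hermitianForm {F : Type*} [Field F] (r : ℕ) (u v : Fin 4 → F) : F :=
  ∑ i, u i * (v i) ^ r

/-- The unitary polar graph `U(4,q)`: vertices are the one-dimensional subspaces of `F^4`
consisting of isotropic vectors, two distinct vertices being adjacent iff the Hermitian form
vanishes between them (for `q = r²`, `H(x,y) = 0 ↔ H(y,x) = 0`, so symmetrizing is
harmless). -/
def unitaryPolarGraph (F : Type*) [Field F] (r : ℕ) :
    SimpleGraph {W : Submodule F (Fin 4 → F) //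
      finrank F W = 1 ∧ ∀ x ∈ W, hermitianForm r x x = 0} :=
  SimpleGraph.fromRel (fun W₁ W₂ => ∀ x ∈ W₁.1, ∀ y ∈ W₂.1, hermitianForm r x y = 0)

instance {F M : Type*} [Field F] [AddCommGroup M] [Module F M] [Finite M] :
    Finite (Submodule F M) :=
  Finite.of_injective _ SetLike.coe_injective

namespace UnitaryPolar

/-! ### Elements of norm `-1` and points of the two lines -/

/-- The isotropic points of `U(4,q)`, i.e. the vertices of the unitary polar graph. -/
abbrev Vertex (F : Type*) [Field F] (r : ℕ) : Type _ :=
  {W : Submodule F (Fin 4 → F) // finrank F W = 1 ∧ ∀ x ∈ W, hermitianForm r x x = 0}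

/-- The elements of `F` of norm `-1`, i.e. the solutions of `t ^ (r + 1) = -1`. -/
abbrev NormRoots (F : Type*) [Field F] (r : ℕ) : Type _ := {t : F // t ^ (r + 1) = -1}

section

variable {F : Type*} [Field F] {r : ℕ}

lemma neg_one_pow_pred [Fintype F] (hr : IsPrimePow r) (hq : Fintype.card F = r ^ 2) :
    (-1 : F) ^ (r - 1) = 1 := by
  rcases Nat.even_or_odd r with he | ho
  · have h2 : (2 : F) = 0 := by
      have h : ((Fintype.card F : ℕ) : F) = 0 := Nat.cast_card_eq_zero F
      obtain ⟨p, k, hp, hk, rfl⟩ := hr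
      have hp2 : p = 2 := by
        have h2 : 2 ∣ p := Nat.prime_two.dvd_of_dvd_pow he.two_dvd
        exact ((Nat.prime_dvd_prime_iff_eq Nat.prime_two hp.nat_prime).1 h2).symm
      subst hp2
      rw [hq] at h
      push_cast at h
      exact eq_zero_of_pow_eq_zero (eq_zero_of_pow_eq_zero h)
    have h1 : (-1 : F) = 1 := by linear_combination -h2
    rw [h1, one_pow]
  · exact (Nat.Odd.sub_odd ho odd_one).neg_one_pow

lemma neg_one_pow_self [Fintype F] (hr : IsPrimePow r) (hq : Fintype.card F = r ^ 2) :
    (-1 : F) ^ r = -1 := by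
  have h := neg_one_pow_pred hr hq
  have h1 : r = (r - 1) + 1 := by have := hr.one_lt; omega
  rw [h1, pow_succ, h, one_mul]

open Polynomial in
lemma card_normRoots [Fintype F] (hr : IsPrimePow r) (hq : Fintype.card F = r ^ 2) :
    Nat.card (NormRoots F r) = r + 1 := by
  classical
  have hmon : (X ^ (r + 1) - C (-1) : F[X]).Monic := monic_X_pow_sub_C _ (by omega)
  have hdvd : (X ^ (r + 1) - C (-1) : F[X]) ∣ X ^ Fintype.card F - X := by
    have h := sub_dvd_pow_sub_pow (X ^ (r + 1) : F[X]) (C (-1)) (r - 1)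
    rw [← C_pow, neg_one_pow_pred hr hq, ← pow_mul] at h
    have h2 : (X ^ Fintype.card F - X : F[X]) = (X ^ ((r + 1) * (r - 1)) - C 1) * X := by
      have : Fintype.card F = (r + 1) * (r - 1) + 1 := by
        rw [hq]
        obtain ⟨s, rfl⟩ : ∃ s, r = s + 1 := ⟨r - 1, by have := hr.one_lt; omega⟩
        simp only [Nat.add_sub_cancel]
        ring
      rw [this, sub_mul, ← pow_succ]
      simp
    rw [h2]
    exact h.mul_right X
  have hne : (X ^ Fintype.card F - X : F[X]) ≠ 0 :=
    FiniteField.X_pow_card_sub_X_ne_zero F Fintype.one_lt_card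
  have hroots := FiniteField.roots_X_pow_card_sub_X F
  have hsplit : (X ^ Fintype.card F - X : F[X]).Splits := by
    rw [splits_iff_card_roots, hroots,
      FiniteField.X_pow_card_sub_X_natDegree_eq F Fintype.one_lt_card]
    rfl
  have hs : (X ^ (r + 1) - C (-1) : F[X]).Splits := hsplit.of_dvd hne hdvd
  have hcard := splits_iff_card_roots.1 hs
  have hnodup : (X ^ (r + 1) - C (-1) : F[X]).roots.Nodup := by
    refine Multiset.nodup_of_le (Polynomial.roots.le_of_dvd hne hdvd) ?_
    rw [hroots]
    exact Finset.univ.nodup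
  rw [natDegree_X_pow_sub_C] at hcard
  rw [Nat.card_eq_fintype_card, Fintype.card_subtype]
  refine Eq.trans ?_ hcard
  rw [← Multiset.toFinset_card_of_nodup hnodup]
  congr 1
  ext t
  simp only [Finset.mem_filter, Finset.mem_univ, true_and, Multiset.mem_toFinset,
    mem_roots hmon.ne_zero, IsRoot.def, eval_sub, eval_pow, eval_X, eval_C, sub_eq_zero]

lemma hermitianForm_smul (c d : F) (x y : Fin 4 → F) :
    hermitianForm r (c • x) (d • y) = c * d ^ r * hermitianForm r x y := by
  simp only [hermitianForm, Fin.sum_univ_four, Pi.smul_apply, smul_eq_mul, mul_pow]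
  ring

lemma exists_vector (γ : Vertex F r) : ∃ v : Fin 4 → F, v ≠ 0 ∧ γ.1 = Submodule.span F {v} ∧
    hermitianForm r v v = 0 := by
  obtain ⟨W, h1, h2⟩ := γ
  obtain ⟨v, hv, hs⟩ := finrank_eq_one_iff'.1 h1
  refine ⟨v.1, by simpa using hv, ?_, h2 _ v.2⟩
  apply le_antisymm
  · intro w hw
    obtain ⟨c, hc⟩ := hs ⟨w, hw⟩
    exact Submodule.mem_span_singleton.2 ⟨c, congrArg Subtype.val hc⟩
  · rw [Submodule.span_singleton_le_iff_mem]
    exact v.2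

/-- Spanning vectors of the isotropic points on the two orthogonal hyperbolic lines
`x₂ = x₃ = 0` (for `true`) and `x₀ = x₁ = 0` (for `false`). -/
def vec (s : Bool) (t : F) : Fin 4 → F := bif s then ![1, t, 0, 0] else ![0, 0, 1, t]

lemma vec_ne_zero (s : Bool) (t : F) : vec s t ≠ 0 := by
  intro h
  cases s
  · simpa [vec] using congrFun h 2
  · simpa [vec] using congrFun h 0

/-- The isotropic point spanned by `vec s t`. -/
def pt (i : Bool × NormRoots F r) : Vertex F r :=
  ⟨Submodule.span F {vec i.1 i.2.1}, finrank_span_singleton (vec_ne_zero _ _), by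
    intro x hx
    obtain ⟨c, rfl⟩ := Submodule.mem_span_singleton.1 hx
    rw [hermitianForm_smul]
    obtain ⟨s, t, ht⟩ := i
    have h0 : hermitianForm r (vec s t) (vec s t) = 0 := by
      have hmul : t * t ^ r = -1 := by rw [← ht]; ring
      cases s <;> rcases r with _ | r <;>
        simp_all [hermitianForm, Fin.sum_univ_four, vec]
    rw [h0, mul_zero]⟩

/-- `⟨v⟩` is the point `pt (s, t)` iff `v` lies on the line `s` and its coordinates there are
proportional to `(1, t)`. -/
lemma pt_eq_iff {γ : Vertex F r} {v : Fin 4 → F} (hv : v ≠ 0)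
    (hγ : γ.1 = Submodule.span F {v}) (s : Bool) (t : NormRoots F r) :
    pt (s, t) = γ ↔ bif s then v 1 = t.1 * v 0 ∧ v 2 = 0 ∧ v 3 = 0
      else v 3 = t.1 * v 2 ∧ v 0 = 0 ∧ v 1 = 0 := by
  rw [Subtype.ext_iff, hγ]
  change Submodule.span F {vec s t.1} = _ ↔ _
  constructor
  · intro h
    have hm : v ∈ Submodule.span F {vec s t.1} := h ▸ Submodule.mem_span_singleton_self v
    obtain ⟨c, rfl⟩ := Submodule.mem_span_singleton.1 hm
    cases s <;> simp [vec, mul_comm]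
  · intro h
    symm
    rw [Submodule.span_singleton_eq_span_singleton]
    cases s
    · obtain ⟨h1, h2, h3⟩ := h
      have h4 : v 2 ≠ 0 := by
        intro h4
        apply hv
        ext i
        fin_cases i <;> simp_all
      refine ⟨(Units.mk0 _ h4)⁻¹, ?_⟩
      ext i
      fin_cases i <;> simp [vec, Units.smul_def, mul_left_comm, *]
    · obtain ⟨h1, h2, h3⟩ := h
      have h4 : v 0 ≠ 0 := by
        intro h4
        apply hv
        ext i
        fin_cases i <;> simp_all
      refine ⟨(Units.mk0 _ h4)⁻¹, ?_⟩
      ext i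
      fin_cases i <;> simp [vec, Units.smul_def, mul_left_comm, *]

lemma pt_injective : Function.Injective (pt : Bool × NormRoots F r → Vertex F r) := by
  rintro ⟨s, t⟩ ⟨s', t'⟩ h
  have h' := (pt_eq_iff (γ := pt (s', t')) (vec_ne_zero s' t'.1) rfl s t).1 h
  cases s <;> cases s' <;> simp [vec] at h' <;> simp [Subtype.ext_iff, h']

/-- Both orders of the arguments of the form give the same condition on a pair of coordinates
`(a, b)` against `(1, t)`; the second one uses `x ^ (r ^ 2) = x`. -/
lemma pair_orthogonal_iff [Fintype F] (hr : IsPrimePow r) (hq : Fintype.card F = r ^ 2)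
    (a b t : F) (ht : t ^ (r + 1) = -1) :
    (a + b * t ^ r = 0 ↔ b = t * a) ∧ (a ^ r + t * b ^ r = 0 ↔ b = t * a) := by
  have hmul : t * t ^ r = -1 := by rw [← ht]; ring
  refine ⟨⟨fun h => ?_, fun h => ?_⟩, ⟨fun h => ?_, fun h => ?_⟩⟩
  · linear_combination (-t) * h + b * hmul
  · linear_combination t ^ r * h + a * hmul
  · have hfrob : ∀ x : F, (x ^ r) ^ r = x := fun x => by
      rw [← pow_mul, ← sq, ← hq, FiniteField.pow_card]
    have h1 : t * b ^ r = (-1) * a ^ r := by linear_combination h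
    have h2 := congrArg (· ^ r) h1
    simp only [mul_pow, hfrob, neg_one_pow_self hr hq] at h2
    linear_combination (-t) * h2 + b * hmul
  · rw [h, mul_pow]
    linear_combination a ^ r * hmul

lemma orthogonal_iff [Fintype F] (hr : IsPrimePow r) (hq : Fintype.card F = r ^ 2)
    (v : Fin 4 → F) (s : Bool) (t : NormRoots F r) :
    (hermitianForm r v (vec s t.1) = 0 ↔ bif s then v 1 = t.1 * v 0 else v 3 = t.1 * v 2) ∧
    (hermitianForm r (vec s t.1) v = 0 ↔ bif s then v 1 = t.1 * v 0 else v 3 = t.1 * v 2) := by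
  have hr0 : r ≠ 0 := hr.ne_zero
  cases s
  · simpa [hermitianForm, vec, Fin.sum_univ_four, hr0] using
      pair_orthogonal_iff hr hq (v 2) (v 3) t.1 t.2
  · simpa [hermitianForm, vec, Fin.sum_univ_four, hr0] using
      pair_orthogonal_iff hr hq (v 0) (v 1) t.1 t.2

lemma adj_pt_iff [Fintype F] (hr : IsPrimePow r) (hq : Fintype.card F = r ^ 2)
    {γ : Vertex F r} {v : Fin 4 → F} (hγ : γ.1 = Submodule.span F {v})
    (s : Bool) (t : NormRoots F r) :
    (unitaryPolarGraph F r).Adj γ (pt (s, t)) ↔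
      pt (s, t) ≠ γ ∧ bif s then v 1 = t.1 * v 0 else v 3 = t.1 * v 2 := by
  have hspan : ∀ x y : Fin 4 → F, (∀ a ∈ Submodule.span F {x}, ∀ b ∈ Submodule.span F {y},
      hermitianForm r a b = 0) ↔ hermitianForm r x y = 0 := by
    intro x y
    constructor
    · intro h
      exact h x (Submodule.mem_span_singleton_self x) y (Submodule.mem_span_singleton_self y)
    · intro h a ha b hb
      obtain ⟨c, rfl⟩ := Submodule.mem_span_singleton.1 ha
      obtain ⟨d, rfl⟩ := Submodule.mem_span_singleton.1 hb
      rw [hermitianForm_smul, h, mul_zero]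
  have ho := orthogonal_iff hr hq v s t
  rw [unitaryPolarGraph, SimpleGraph.fromRel_adj, hγ]
  change _ ∧ ((∀ a ∈ _, ∀ b ∈ Submodule.span F {vec s t.1}, _) ∨
    (∀ a ∈ Submodule.span F {vec s t.1}, ∀ b ∈ _, _)) ↔ _
  rw [hspan, hspan, ho.1, ho.2, or_self, ne_comm]

end

/-! ### Counting orthogonal points on a line -/

section Count

open Classical in
/-- The number of `t` of norm `-1` with `b = t * a`, as a real number. -/
noncomputable def count {F : Type*} [Field F] [Fintype F] (r : ℕ) (a b : F) : ℝ :=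
  ∑ t : NormRoots F r, if b = t.1 * a then 1 else 0

variable {F : Type*} [Field F] [Fintype F] {r : ℕ}

lemma count_zero (hr : IsPrimePow r) (hq : Fintype.card F = r ^ 2) :
    count r (0 : F) 0 = r + 1 := by
  classical
  have h := card_normRoots hr hq
  rw [Nat.card_eq_fintype_card] at h
  simp only [count, mul_zero, if_true, Finset.sum_const, Finset.card_univ, nsmul_eq_mul, mul_one]
  rw [h]
  push_cast
  rfl

lemma count_one {a b : F} (hab : ¬ (a = 0 ∧ b = 0)) (h : a ^ (r + 1) + b ^ (r + 1) = 0) :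
    count r a b = 1 := by
  classical
  have ha : a ≠ 0 := by
    rintro rfl
    exact hab ⟨rfl, by simpa using h⟩
  have ht : (b / a) ^ (r + 1) = -1 := by
    rw [div_pow, div_eq_iff (pow_ne_zero _ ha)]
    linear_combination h
  rw [count, Finset.sum_eq_single ⟨b / a, ht⟩]
  · simp [ha]
  · intro t _ hne
    rw [if_neg]
    intro hb
    apply hne
    ext
    simp [hb, ha]
  · simp

lemma count_none {a b : F} (h : a ^ (r + 1) + b ^ (r + 1) ≠ 0) : count r a b = 0 := by
  classical
  refine Finset.sum_eq_zero fun t _ => if_neg ?_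
  rintro rfl
  apply h
  rw [mul_pow, t.2]
  ring

end Count

/-! ### The eigenfunction -/

section Eigenfunction

variable {F : Type*} [Field F] [Fintype F] {r : ℕ}

/-- The value of the eigenfunction on the points of each of the two lines. -/
def sgn (s : Bool) : ℝ := bif s then 1 else -1

open Classical in
/-- The function equal to `1` on the isotropic points of the first line, to `-1` on those of the
second, and to `0` elsewhere. -/
noncomputable def eigenfun (γ : Vertex F r) : ℝ :=
  ∑ i : Bool × NormRoots F r, if pt i = γ then sgn i.1 else 0

lemma eigenfun_pt (i : Bool × NormRoots F r) : eigenfun (pt i) = sgn i.1 := by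
  classical
  simp [eigenfun, pt_injective.eq_iff]

lemma support_eigenfun :
    {γ : Vertex F r | eigenfun γ ≠ 0} = Set.range (pt : Bool × NormRoots F r → _) := by
  classical
  ext γ
  constructor
  · intro h
    by_contra hγ
    refine h (Finset.sum_eq_zero fun i _ => if_neg fun hi => hγ ⟨i, hi⟩)
  · rintro ⟨i, rfl⟩
    rw [Set.mem_ofPred_eq, eigenfun_pt]
    cases i.1 <;> simp [sgn]

open Classical in
lemma neighbor_sum (γ : Vertex F r) :
    ∑ᶠ δ ∈ (unitaryPolarGraph F r).neighborSet γ, eigenfun δ =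
      ∑ i : Bool × NormRoots F r,
        if (unitaryPolarGraph F r).Adj γ (pt i) then sgn i.1 else 0 := by
  have : Fintype (Vertex F r) := Fintype.ofFinite _
  rw [finsum_mem_def, finsum_eq_sum_of_fintype]
  simp only [Set.indicator_apply, SimpleGraph.mem_neighborSet]
  calc _ = ∑ δ : Vertex F r, ∑ i : Bool × NormRoots F r,
        if pt i = δ then (if (unitaryPolarGraph F r).Adj γ (pt i) then sgn i.1 else 0)
          else 0 := by
        refine Finset.sum_congr rfl fun δ _ => ?_
        split_ifs with h
        · refine Finset.sum_congr rfl fun i _ => ?_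
          by_cases hi : pt i = δ
          · subst hi; simp [h]
          · simp [hi]
        · symm
          refine Finset.sum_eq_zero fun i _ => ?_
          by_cases hi : pt i = δ
          · subst hi; simp [h]
          · simp [hi]
    _ = _ := by
        rw [Finset.sum_comm]
        simp

lemma eigen_equation (hr : IsPrimePow r) (hq : Fintype.card F = r ^ 2) (γ : Vertex F r) :
    (-((r : ℝ) + 1)) * eigenfun γ =
      ∑ᶠ δ ∈ (unitaryPolarGraph F r).neighborSet γ, eigenfun δ := by
  classical
  obtain ⟨v, hv, hγ, hiso⟩ := exists_vector γ
  have hiso' : (v 0 ^ (r + 1) + v 1 ^ (r + 1)) + (v 2 ^ (r + 1) + v 3 ^ (r + 1)) = 0 := by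
    rw [hermitianForm, Fin.sum_univ_four] at hiso
    linear_combination hiso
  have hE : eigenfun γ = (if v 2 = 0 ∧ v 3 = 0 then count r (v 0) (v 1) else 0) -
      (if v 0 = 0 ∧ v 1 = 0 then count r (v 2) (v 3) else 0) := by
    simp only [eigenfun, Fintype.sum_prod_type, Fintype.sum_bool, pt_eq_iff hv hγ, cond_true,
      cond_false, sgn, count, sub_eq_add_neg]
    congr 1
    · split_ifs with h <;> simp [h]
    · by_cases h : v 0 = 0 ∧ v 1 = 0
      · rw [if_pos h, ← Finset.sum_neg_distrib]
        refine Finset.sum_congr rfl fun t _ => ?_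
        by_cases hb : v 3 = t.1 * v 2 <;> simp [hb, h]
      · simp [h]
  -- A point equal to `⟨v⟩` is orthogonal to it without being adjacent, so the signed count of
  -- neighbours is the signed count of orthogonal points minus `eigenfun γ`.
  have hN : ∑ᶠ δ ∈ (unitaryPolarGraph F r).neighborSet γ, eigenfun δ =
      count r (v 0) (v 1) - count r (v 2) (v 3) - eigenfun γ := by
    rw [neighbor_sum, eq_sub_iff_add_eq, eigenfun, ← Finset.sum_add_distrib]
    simp only [Fintype.sum_prod_type, Fintype.sum_bool, count, sub_eq_add_neg,
      ← Finset.sum_neg_distrib]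
    congr 1 <;> refine Finset.sum_congr rfl fun t _ => ?_
    · have h1 := adj_pt_iff hr hq hγ true t
      have h2 := pt_eq_iff hv hγ true t
      simp only [cond_true] at h1 h2
      by_cases ha : pt (true, t) = γ
      · simp [ha, (h2.1 ha).1, sgn]
      · simp [h1, ha, sgn]
    · have h1 := adj_pt_iff hr hq hγ false t
      have h2 := pt_eq_iff hv hγ false t
      simp only [cond_false] at h1 h2
      by_cases ha : pt (false, t) = γ
      · simp [ha, (h2.1 ha).1, sgn]
      · by_cases hb : v 3 = t.1 * v 2 <;> simp [h1, ha, hb, sgn]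
  rw [hN, hE]
  by_cases hA : v 0 = 0 ∧ v 1 = 0
  · have hB : ¬ (v 2 = 0 ∧ v 3 = 0) := by
      rintro ⟨h2, h3⟩
      apply hv
      ext i
      fin_cases i <;> simp [hA, h2, h3]
    have h23 : v 2 ^ (r + 1) + v 3 ^ (r + 1) = 0 := by simpa [hA.1, hA.2] using hiso'
    rw [if_neg hB, if_pos hA, count_one hB h23, hA.1, hA.2, count_zero hr hq]
    ring
  · by_cases hB : v 2 = 0 ∧ v 3 = 0
    · have h01 : v 0 ^ (r + 1) + v 1 ^ (r + 1) = 0 := by simpa [hB.1, hB.2] using hiso'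
      rw [if_neg hA, if_pos hB, count_one hA h01, hB.1, hB.2, count_zero hr hq]
      ring
    · rw [if_neg hA, if_neg hB]
      by_cases h01 : v 0 ^ (r + 1) + v 1 ^ (r + 1) = 0
      · have h23 : v 2 ^ (r + 1) + v 3 ^ (r + 1) = 0 := by simpa [h01] using hiso'
        rw [count_one hA h01, count_one hB h23]
        ring
      · have h23 : v 2 ^ (r + 1) + v 3 ^ (r + 1) ≠ 0 := by
          intro h
          rw [h, add_zero] at hiso'
          exact h01 hiso'
        rw [count_none h01, count_none h23]
        ring

end Eigenfunction

end UnitaryPolar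

/-- the unitary polar graph `U(4,q)` has a `-(r+1)`-eigenfunction whose support
has cardinality exactly `2(r+1)`. -/
theorem stmt17 (F : Type*) [Field F] [Fintype F] (r q : ℕ)
    (hr : IsPrimePow r) (hq : Fintype.card F = q) (hq2 : q = r ^ 2) :
    ∃ f : {W : Submodule F (Fin 4 → F) //
        finrank F W = 1 ∧ ∀ x ∈ W, hermitianForm r x x = 0} → ℝ,
      f ≠ 0 ∧
      (∀ γ, (-((r : ℝ) + 1)) * f γ = ∑ᶠ δ ∈ (unitaryPolarGraph F r).neighborSet γ, f δ) ∧
      {γ | f γ ≠ 0}.ncard = 2 * (r + 1) := by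
  subst hq2
  have hcard : {γ : UnitaryPolar.Vertex F r | UnitaryPolar.eigenfun γ ≠ 0}.ncard
      = 2 * (r + 1) := by
    rw [UnitaryPolar.support_eigenfun, ← Set.image_univ,
      Set.ncard_image_of_injective _ UnitaryPolar.pt_injective, Set.ncard_univ, Nat.card_prod,
      UnitaryPolar.card_normRoots hr hq, Nat.card_eq_fintype_card, Fintype.card_bool]
  refine ⟨UnitaryPolar.eigenfun, ?_, UnitaryPolar.eigen_equation hr hq, hcard⟩
  intro h
  simp [h] at hcard
end

section
/- Assume q is even. Let T0 = {⟨(1,γ,0,0)⟩ : γ ∈ F_q, γ^{r+1} = 1} and T1 = {⟨(0,0,1,γ)⟩ : γ ∈ F_q, γ^{r+1} = 1}. Then all of these spanning vectors are isotropic, so T0 and T1 are sets of vertices of U(4,q) with |T0| = |T1| = r+1; every vertex of T0 is adjacent to every vertex of T1 and no two distinct vertices within T0 (or within T1) are adjacent; every vertex outside T0 ∪ T1 has at most one neighbour in T0, at most one neighbour in T1, and has a neighbour in T0 if and only if it has a neighbour in T1. Consequently, the function equal to 1 on T0, to −1 on T1, and to 0 elsewhere is a (−(r+1))-eigenfunction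 of U(4,q) whose support has cardinality 2(r+1). -/
/-!
Write `N(x) = x^(r+1)` for the norm of `F = F_{r²}` over `F_r`, so that
`H(v,v) = N(v₀) + N(v₁) + N(v₂) + N(v₃)`. The parts `T₀` and `T₁` play symmetric roles and are
treated together through a Boolean `s`, which selects the coordinate pair `(0,1)` or `(2,3)`.

For `γ` of norm one, a vertex `⟨v⟩` other than `⟨(1,γ,0,0)⟩` is adjacent to it exactly when
`v₁ = γ v₀` (`adj_iff_slope`); here `γ^r = γ⁻¹` and `-1 = 1` are used. This gives the
statements about pairs of vertices in `T₀ ∪ T₁`. For an outside vertex `⟨v⟩`: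

* two neighbours in one part have different slopes, which forces `v₀ = v₁ = 0`; isotropy then
  puts `⟨v⟩` in the other part (`mem_part_of_zero`);
* a neighbour in one part gives `N(v₀) + N(v₁) = 0`, hence `N(v₂) + N(v₃) = 0`, so `v₃` is a
  norm-one multiple of `v₂` (`exists_slope_other`), and the multiplier gives a neighbour in the
  other part.

The cardinality `r + 1` counts the solutions of `γ^(r+1) = 1` in the cyclic group of order
`r² - 1`. The eigenvalue equation then follows for any graph with such a pair of parts
(`eigenfunction_of_parts`): the neighbour sum of `1_{T₀} - 1_{T₁}` is a difference of two
neighbour counts.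
-/

open Module

/-! ### The two parts -/

/-- The vertex type of `U(4,q)`: one-dimensional totally isotropic subspaces of `F^4`. -/
abbrev UVertex (F : Type*) [Field F] (r : ℕ) :=
  {W : Submodule F (Fin 4 → F) // finrank F W = 1 ∧ ∀ x ∈ W, hermitianForm r x x = 0}

/-- The spanning vector `(1,γ,0,0)` of a point of `T₀` (`s = false`), or `(0,0,1,γ)` of a point of
`T₁` (`s = true`). -/
def partVec {F : Type*} [Field F] (s : Bool) (γ : F) : Fin 4 → F :=
  if s then ![0, 0, 1, γ] else ![1, γ, 0, 0]

/-- The first of the two coordinates on which `partVec s γ` is supported. -/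
def fstIdx (s : Bool) : Fin 4 := if s then 2 else 0

/-- The second of the two coordinates on which `partVec s γ` is supported. -/
def sndIdx (s : Bool) : Fin 4 := if s then 3 else 1

/-- The part `T₀` (`s = false`) or `T₁` (`s = true`). -/
def part (F : Type*) [Field F] (r : ℕ) (s : Bool) : Set (UVertex F r) :=
  {W | ∃ γ : F, γ ^ (r + 1) = 1 ∧ W.1 = Submodule.span F {partVec s γ}}

/-- The arithmetic of `F_{r²}` with `r` even that the argument uses: characteristic two, and
`x ↦ x^r` is an additive involution. -/
structure EvenHermitian (F : Type*) [Field F] (r : ℕ) : Prop where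
  ne_zero : r ≠ 0
  two_eq_zero : (2 : F) = 0
  add_pow : ∀ x y : F, (x + y) ^ r = x ^ r + y ^ r
  pow_pow : ∀ x : F, (x ^ r) ^ r = x

section Field

variable {F : Type*} [Field F] {r : ℕ}

/-! ### Arithmetic of the field -/

lemma evenHermitian_of_card [Fintype F] (hr : IsPrimePow r) (hq : Fintype.card F = r ^ 2)
    (heven : Even (Fintype.card F)) : EvenHermitian F r := by
  have hc : ringChar F = 2 :=
    FiniteField.even_card_iff_char_two.mpr (Nat.even_iff.mp heven)
  have : CharP F 2 := by rw [← hc]; infer_instance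
  have : Fact (Nat.Prime 2) := ⟨Nat.prime_two⟩
  obtain ⟨p, k, hp, hk, rfl⟩ := hr
  have hp2 : p = 2 := by
    have h2 : 2 ∣ (p ^ k) ^ 2 := hq ▸ heven.two_dvd
    have := Nat.prime_two.dvd_of_dvd_pow (Nat.prime_two.dvd_of_dvd_pow h2)
    exact ((Nat.prime_dvd_prime_iff_eq Nat.prime_two hp.nat_prime).mp this).symm
  subst hp2
  refine ⟨by positivity, CharTwo.two_eq_zero, fun x y => add_pow_char_pow x y 2 k, fun x => ?_⟩
  rw [← _root_.pow_mul, ← sq, ← hq, FiniteField.pow_card]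

lemma card_norm_one [Fintype F] (hq : Fintype.card F = r ^ 2) :
    Nat.card {γ : F // γ ^ (r + 1) = 1} = r + 1 := by
  have e : (powMonoidHom (r + 1) : Fˣ →* Fˣ).ker ≃ {γ : F // γ ^ (r + 1) = 1} :=
    { toFun := fun u => ⟨(u.1 : F), by
        have := u.2
        rw [MonoidHom.mem_ker, powMonoidHom_apply] at this
        simpa using congrArg Units.val this⟩
      invFun := fun γ => ⟨Units.ofPowEqOne γ.1 (r + 1) γ.2 (by omega), by
        rw [MonoidHom.mem_ker, powMonoidHom_apply]
        ext
        simp⟩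
      left_inv := fun u => by ext; simp
      right_inv := fun γ => by ext; simp }
  rw [← Nat.card_congr e, IsCyclic.card_powMonoidHom_ker, Nat.card_units,
    Nat.card_eq_fintype_card, hq]
  apply Nat.gcd_eq_right
  have : r ^ 2 - 1 = (r + 1) * (r - 1) := by
    have := Nat.sq_sub_sq r 1
    simpa using this
  exact this ▸ dvd_mul_right _ _

/-! ### Coordinates and adjacency -/

lemma hermitianForm_split (s : Bool) (u v : Fin 4 → F) :
    hermitianForm r u v =
      u (fstIdx s) * v (fstIdx s) ^ r + u (sndIdx s) * v (sndIdx s) ^ r +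
      (u (fstIdx !s) * v (fstIdx !s) ^ r + u (sndIdx !s) * v (sndIdx !s) ^ r) := by
  cases s <;> simp [hermitianForm, Fin.sum_univ_four, fstIdx, sndIdx] <;> ring

lemma vec_ext {K : Type*} {s : Bool} {u v : Fin 4 → K} (h1 : u (fstIdx s) = v (fstIdx s))
    (h2 : u (sndIdx s) = v (sndIdx s)) (h3 : u (fstIdx !s) = v (fstIdx !s))
    (h4 : u (sndIdx !s) = v (sndIdx !s)) : u = v := by
  ext i
  cases s <;> fin_cases i <;> simp_all [fstIdx, sndIdx]

@[simp] lemma partVec_fst (s : Bool) (γ : F) : partVec s γ (fstIdx s) = 1 := by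
  cases s <;> simp [partVec, fstIdx]

@[simp] lemma partVec_snd (s : Bool) (γ : F) : partVec s γ (sndIdx s) = γ := by
  cases s <;> simp [partVec, sndIdx]

@[simp] lemma partVec_fst_not (s : Bool) (γ : F) : partVec s γ (fstIdx !s) = 0 := by
  cases s <;> simp [partVec, fstIdx]

@[simp] lemma partVec_snd_not (s : Bool) (γ : F) : partVec s γ (sndIdx !s) = 0 := by
  cases s <;> simp [partVec, sndIdx]

lemma partVec_ne_zero (s : Bool) (γ : F) : partVec s γ ≠ 0 := fun h => by
  simpa using congrFun h (fstIdx s)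

lemma partVec_isotropic (h : EvenHermitian F r) (s : Bool) {γ : F} (hγ : γ ^ (r + 1) = 1) :
    hermitianForm r (partVec s γ) (partVec s γ) = 0 := by
  have := h.two_eq_zero
  rw [hermitianForm_split s]
  simp only [partVec_fst, partVec_snd, partVec_fst_not, partVec_snd_not, one_pow, mul_one,
    zero_mul, add_zero]
  linear_combination hγ + this

lemma exists_span (W : UVertex F r) :
    ∃ v : Fin 4 → F, v ≠ 0 ∧ W.1 = Submodule.span F {v} ∧ hermitianForm r v v = 0 := by
  obtain ⟨v, hv0, hv⟩ := finrank_eq_one_iff'.mp W.2.1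
  refine ⟨v.1, by simpa using hv0, le_antisymm (fun x hx => ?_) ?_, W.2.2 _ v.2⟩
  · obtain ⟨c, hc⟩ := hv ⟨x, hx⟩
    exact Submodule.mem_span_singleton.mpr ⟨c, congrArg Subtype.val hc⟩
  · simp

/-- For a vertex `W ≠ V`, adjacency to the point `V = ⟨(1,γ,0,0)⟩` (or `⟨(0,0,1,γ)⟩`) says that all
vectors of `W` have slope `γ` in the corresponding coordinate pair. -/
lemma adj_iff_slope (h : EvenHermitian F r) {s : Bool} {γ : F} (hγ : γ ^ (r + 1) = 1)
    {W V : UVertex F r} (hV : V.1 = Submodule.span F {partVec s γ}) :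
    (unitaryPolarGraph F r).Adj W V ↔
      W ≠ V ∧ ∀ x ∈ W.1, x (sndIdx s) = γ * x (fstIdx s) := by
  have h2 := h.two_eq_zero
  have hr0 := h.ne_zero
  have hmem : partVec s γ ∈ V.1 := hV ▸ Submodule.mem_span_singleton_self _
  rw [unitaryPolarGraph, SimpleGraph.fromRel_adj]
  refine and_congr_right fun _ => ⟨?_, fun H => Or.inl fun x hx y hy => ?_⟩
  · have key : ∀ a b : F, a + b * γ ^ r = 0 → b = γ * a := fun a b hab => by
      linear_combination (-γ) * hab + b * hγ + b * h2
    rintro (H | H) x hx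
    · have := H x hx _ hmem
      rw [hermitianForm_split s] at this
      simp only [partVec_fst, partVec_snd, partVec_fst_not, partVec_snd_not, one_pow, mul_one,
        zero_pow hr0, mul_zero, add_zero] at this
      exact key _ _ this
    · have := H _ hmem x hx
      rw [hermitianForm_split s] at this
      simp only [partVec_fst, partVec_snd, partVec_fst_not, partVec_snd_not, one_mul,
        zero_mul, add_zero] at this
      -- applying the involution `x ↦ x^r` exchanges the two arguments of the form
      have h' := congrArg (· ^ r) this
      simp only [h.add_pow, mul_pow, h.pow_pow, zero_pow hr0] at h'
      exact key _ _ (by rw [mul_comm]; exact h')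
  · rw [hV, Submodule.mem_span_singleton] at hy
    obtain ⟨c, rfl⟩ := hy
    rw [hermitianForm_split s, H x hx]
    simp only [Pi.smul_apply, smul_eq_mul, partVec_fst, partVec_snd, partVec_fst_not,
      partVec_snd_not, mul_one, mul_zero, zero_pow hr0, mul_pow, add_zero]
    linear_combination x (fstIdx s) * c ^ r * hγ + x (fstIdx s) * c ^ r * h2

/-- If the norms of `a` and `b` cancel, then `b` is a norm-one multiple of `a`; for `a = 0` this
forces `b = 0`, and any multiplier will do. -/
lemma exists_slope (h : EvenHermitian F r) {a b : F} (hab : a * a ^ r + b * b ^ r = 0) :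
    ∃ δ : F, δ ^ (r + 1) = 1 ∧ b = δ * a := by
  have h2 := h.two_eq_zero
  by_cases ha : a = 0
  · subst ha
    refine ⟨1, one_pow _, ?_⟩
    have hb : b ^ (r + 1) = 0 := by
      rw [pow_succ']; linear_combination hab
    rw [pow_eq_zero_iff (by omega)] at hb
    simp [hb]
  · refine ⟨b / a, ?_, by field_simp⟩
    rw [div_pow, div_eq_one_iff_eq (pow_ne_zero _ ha), pow_succ', pow_succ']
    linear_combination hab - a * a ^ r * h2

lemma mem_part_of_zero (h : EvenHermitian F r) {s : Bool} {W : UVertex F r}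
    (hW : ∀ x ∈ W.1, x (fstIdx s) = 0 ∧ x (sndIdx s) = 0) : W ∈ part F r (!s) := by
  obtain ⟨v, hv0, hWv, hv⟩ := exists_span W
  obtain ⟨h1, h2⟩ := hW v (hWv ▸ Submodule.mem_span_singleton_self _)
  rw [hermitianForm_split s, h1, h2] at hv
  obtain ⟨δ, hδ, hb⟩ := exists_slope h (by simpa using hv)
  refine ⟨δ, hδ, ?_⟩
  have hvec : v = v (fstIdx !s) • partVec (!s) δ := by
    have e1 := partVec_fst_not (!s) δ
    have e2 := partVec_snd_not (!s) δ
    rw [Bool.not_not] at e1 e2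
    apply vec_ext (s := s)
    · simp [h1, e1]
    · simp [h2, e2]
    · simp
    · simp [hb, mul_comm]
  have hne : v (fstIdx !s) ≠ 0 := fun h0 => hv0 (by rw [hvec, h0, zero_smul])
  rw [hWv, hvec]
  exact Submodule.span_singleton_smul_eq (isUnit_iff_ne_zero.mpr hne) _

lemma exists_slope_other (h : EvenHermitian F r) {s : Bool} {γ : F} (hγ : γ ^ (r + 1) = 1)
    {W : UVertex F r} (hW : ∀ x ∈ W.1, x (sndIdx s) = γ * x (fstIdx s)) :
    ∃ δ : F, δ ^ (r + 1) = 1 ∧ ∀ x ∈ W.1, x (sndIdx !s) = δ * x (fstIdx !s) := by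
  have h2 := h.two_eq_zero
  obtain ⟨v, hv0, hWv, hv⟩ := exists_span W
  have h1 := hW v (hWv ▸ Submodule.mem_span_singleton_self _)
  rw [hermitianForm_split s, h1, mul_pow] at hv
  obtain ⟨δ, hδ, hb⟩ := exists_slope h (a := v (fstIdx !s)) (b := v (sndIdx !s)) (by
    linear_combination hv - v (fstIdx s) * v (fstIdx s) ^ r * hγ -
      v (fstIdx s) * v (fstIdx s) ^ r * h2)
  refine ⟨δ, hδ, fun x hx => ?_⟩
  rw [hWv, Submodule.mem_span_singleton] at hx
  obtain ⟨c, rfl⟩ := hx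
  simp only [Pi.smul_apply, smul_eq_mul, hb]
  ring

/-- The vertex spanned by `partVec s γ`. -/
def partVertex (h : EvenHermitian F r) (s : Bool) (γ : {γ : F // γ ^ (r + 1) = 1}) :
    UVertex F r :=
  ⟨Submodule.span F {partVec s γ.1}, finrank_span_singleton (partVec_ne_zero s γ.1),
    fun x hx => by
      obtain ⟨c, rfl⟩ := Submodule.mem_span_singleton.mp hx
      have := partVec_isotropic h s γ.2
      have e : hermitianForm r (c • partVec s γ.1) (c • partVec s γ.1) =
          c * c ^ r * hermitianForm r (partVec s γ.1) (partVec s γ.1) := by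
        simp only [hermitianForm, Finset.mul_sum, Pi.smul_apply, smul_eq_mul, mul_pow]
        exact Finset.sum_congr rfl fun i _ => by ring
      rw [e, this, mul_zero]⟩

lemma slope_of_eq_span {s : Bool} {γ : F} {W : UVertex F r}
    (hW : W.1 = Submodule.span F {partVec s γ}) :
    ∀ x ∈ W.1, x (sndIdx s) = γ * x (fstIdx s) := by
  intro x hx
  rw [hW, Submodule.mem_span_singleton] at hx
  obtain ⟨c, rfl⟩ := hx
  simp [mul_comm]

lemma slope_unique {s : Bool} {γ δ : F} {W : UVertex F r}
    (hW : W.1 = Submodule.span F {partVec s γ})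
    (hδ : ∀ x ∈ W.1, x (sndIdx s) = δ * x (fstIdx s)) : γ = δ := by
  simpa using hδ (partVec s γ) (hW ▸ Submodule.mem_span_singleton_self _)

/-! ### Combinatorics of the parts -/

lemma ncard_part [Fintype F] (h : EvenHermitian F r) (hq : Fintype.card F = r ^ 2) (s : Bool) :
    (part F r s).ncard = r + 1 := by
  have hrange : part F r s = Set.range (partVertex h s) := by
    ext W
    constructor
    · rintro ⟨γ, hγ, hW⟩
      exact ⟨⟨γ, hγ⟩, Subtype.ext hW.symm⟩
    · rintro ⟨γ, rfl⟩
      exact ⟨γ.1, γ.2, rfl⟩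
  have hinj : Function.Injective (partVertex h s) := fun γ δ e => by
    refine Subtype.ext (slope_unique (W := partVertex h s γ) rfl ?_)
    rw [e]
    exact slope_of_eq_span rfl
  rw [hrange, Set.ncard_range_of_injective hinj, card_norm_one hq]

lemma adj_parts (h : EvenHermitian F r) {s : Bool} {x y : UVertex F r}
    (hx : x ∈ part F r s) (hy : y ∈ part F r (!s)) : (unitaryPolarGraph F r).Adj x y := by
  obtain ⟨γ, hγ, hx⟩ := hx
  obtain ⟨δ, hδ, hy⟩ := hy
  rw [adj_iff_slope h hδ hy]
  refine ⟨?_, fun z hz => ?_⟩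
  · rintro rfl
    have : partVec s γ ∈ x.1 := hx ▸ Submodule.mem_span_singleton_self _
    rw [hy, Submodule.mem_span_singleton] at this
    obtain ⟨c, hc⟩ := this
    have e := partVec_fst_not (!s) δ
    rw [Bool.not_not] at e
    simpa [e] using congrFun hc (fstIdx s)
  · rw [hx, Submodule.mem_span_singleton] at hz
    obtain ⟨c, rfl⟩ := hz
    simp

lemma not_adj_part (h : EvenHermitian F r) {s : Bool} {x y : UVertex F r}
    (hx : x ∈ part F r s) (hy : y ∈ part F r s) : ¬(unitaryPolarGraph F r).Adj x y := by
  obtain ⟨γ, hγ, hx⟩ := hx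
  obtain ⟨δ, hδ, hy⟩ := hy
  rw [adj_iff_slope h hδ hy]
  rintro ⟨hne, H⟩
  have := slope_unique hx H
  subst this
  exact hne (Subtype.ext (hx.trans hy.symm))

lemma subsingleton_nbrs (h : EvenHermitian F r) {s : Bool} {u : UVertex F r}
    (hu : u ∉ part F r (!s)) :
    {x ∈ part F r s | (unitaryPolarGraph F r).Adj u x}.Subsingleton := by
  rintro x ⟨⟨γ, hγ, hx⟩, hux⟩ y ⟨⟨δ, hδ, hy⟩, huy⟩
  rw [adj_iff_slope h hγ hx] at hux
  rw [adj_iff_slope h hδ hy] at huy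
  by_cases hγδ : γ = δ
  · subst hγδ
    exact Subtype.ext (hx.trans hy.symm)
  · refine absurd (mem_part_of_zero h fun z hz => ?_) hu
    have h1 := hux.2 z hz
    have h2 := huy.2 z hz
    have h0 : z (fstIdx s) = 0 := by
      have : (γ - δ) * z (fstIdx s) = 0 := by linear_combination h2 - h1
      exact (mul_eq_zero.mp this).resolve_left (sub_ne_zero.mpr hγδ)
    exact ⟨h0, by rw [h1, h0, mul_zero]⟩

lemma exists_nbr_other (h : EvenHermitian F r) {s : Bool} {u : UVertex F r}
    (hu : u ∉ part F r (!s)) (H : ∃ x ∈ part F r s, (unitaryPolarGraph F r).Adj u x) :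
    ∃ x ∈ part F r (!s), (unitaryPolarGraph F r).Adj u x := by
  obtain ⟨x, ⟨γ, hγ, hx⟩, hux⟩ := H
  rw [adj_iff_slope h hγ hx] at hux
  obtain ⟨δ, hδ, H⟩ := exists_slope_other h hγ hux.2
  have hm : partVertex h (!s) ⟨δ, hδ⟩ ∈ part F r (!s) := ⟨δ, hδ, rfl⟩
  refine ⟨_, hm, ?_⟩
  rw [adj_iff_slope h hδ rfl]
  exact ⟨fun e => hu (e ▸ hm), H⟩

end Field

/-! ### The eigenfunction -/

/-- If two cocliques of size `k` are completely joined and every outside vertex has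
equally many, and at most one, neighbours in each, then the difference of their indicator
functions is an eigenfunction for `-k`. -/
lemma eigenfunction_of_parts {V : Type*} [Finite V] (G : SimpleGraph V) (T₀ T₁ : Set V) (k : ℕ)
    (hk : k ≠ 0) (h0 : T₀.ncard = k) (h1 : T₁.ncard = k)
    (h01 : ∀ x ∈ T₀, ∀ y ∈ T₁, G.Adj x y)
    (h00 : ∀ x ∈ T₀, ∀ y ∈ T₀, ¬G.Adj x y) (h11 : ∀ x ∈ T₁, ∀ y ∈ T₁, ¬G.Adj x y)
    (hout : ∀ u, u ∉ T₀ ∪ T₁ →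
      {x ∈ T₀ | G.Adj u x}.ncard ≤ 1 ∧ {x ∈ T₁ | G.Adj u x}.ncard ≤ 1 ∧
      ((∃ x ∈ T₀, G.Adj u x) ↔ (∃ x ∈ T₁, G.Adj u x)))
    (f : V → ℝ) (f0 : ∀ x ∈ T₀, f x = 1) (f1 : ∀ x ∈ T₁, f x = -1)
    (f2 : ∀ x, x ∉ T₀ ∪ T₁ → f x = 0) :
    f ≠ 0 ∧ (∀ γ, (-(k : ℝ)) * f γ = ∑ᶠ δ ∈ G.neighborSet γ, f δ) ∧
      {γ | f γ ≠ 0}.ncard = 2 * k := by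
  classical
  have hdisj : ∀ x ∈ T₀, x ∉ T₁ := fun x hx hx' => G.loopless.irrefl x (h01 x hx x hx')
  have hsum : ∀ γ, ∑ᶠ δ ∈ G.neighborSet γ, f δ =
      ({x ∈ T₀ | G.Adj γ x}.ncard : ℝ) - ({x ∈ T₁ | G.Adj γ x}.ncard : ℝ) := by
    intro γ
    have hcard : ∀ s : Set V, (s.ncard : ℝ) = ∑ᶠ x, s.indicator (fun _ => (1 : ℝ)) x := by
      intro s
      have := Fintype.ofFinite V
      rw [finsum_eq_sum_of_fintype, Set.ncard_eq_toFinset_card' s]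
      simp [Set.indicator_apply]
    rw [hcard, hcard, ← finsum_sub_distrib (Set.toFinite _) (Set.toFinite _)]
    refine finsum_congr fun δ => ?_
    by_cases hδ : G.Adj γ δ
    · by_cases d0 : δ ∈ T₀
      · simp [hδ, d0, hdisj δ d0, f0 δ d0]
      · by_cases d1 : δ ∈ T₁
        · simp [hδ, d0, d1, f1 δ d1]
        · simp [hδ, d0, d1, f2 δ (by simp [d0, d1])]
    · simp [hδ]
  refine ⟨?_, fun γ => ?_, ?_⟩
  · rintro rfl
    obtain ⟨x, hx⟩ := Set.nonempty_of_ncard_ne_zero (h0 ▸ hk : T₀.ncard ≠ 0)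
    simpa using f0 x hx
  · rw [hsum]
    by_cases g0 : γ ∈ T₀
    · have e0 : {x ∈ T₀ | G.Adj γ x} = ∅ := by
        ext x; simpa using fun hx => h00 γ g0 x hx
      have e1 : {x ∈ T₁ | G.Adj γ x} = T₁ := by
        ext x; simpa using fun hx => h01 γ g0 x hx
      rw [e0, e1, f0 γ g0, h1]
      simp
    · by_cases g1 : γ ∈ T₁
      · have e0 : {x ∈ T₁ | G.Adj γ x} = ∅ := by
          ext x; simpa using fun hx => h11 γ g1 x hx
        have e1 : {x ∈ T₀ | G.Adj γ x} = T₀ := by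
          ext x; simpa using fun hx => (h01 x hx γ g1).symm
        rw [e0, e1, f1 γ g1, h0]
        simp
      · obtain ⟨c0, c1, hiff⟩ := hout γ (by simp [g0, g1])
        have hpos : 0 < {x ∈ T₀ | G.Adj γ x}.ncard ↔ 0 < {x ∈ T₁ | G.Adj γ x}.ncard := by
          rw [Set.ncard_pos, Set.ncard_pos]
          exact hiff
        have heq : {x ∈ T₀ | G.Adj γ x}.ncard = {x ∈ T₁ | G.Adj γ x}.ncard := by omega
        rw [heq, f2 γ (by simp [g0, g1])]
        simp
  · have hsupp : {γ | f γ ≠ 0} = T₀ ∪ T₁ := by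
      ext x
      by_cases d0 : x ∈ T₀
      · simp [d0, f0 x d0]
      · by_cases d1 : x ∈ T₁
        · simp [d1, f1 x d1]
        · simp [d0, d1, f2 x (by simp [d0, d1])]
    rw [hsupp, Set.ncard_union_eq (Set.disjoint_left.mpr hdisj), h0, h1]
    ring

/-- `q` even: the explicit pair `T₀, T₁` of sets of vertices of `U(4,q)`
induces a complete bipartite subgraph with parts of size `r+1`, every outside vertex has at
most one neighbour in each part, with a neighbour in one part iff in the other, and the
associated `±1` function is a `-(r+1)`-eigenfunction with support of cardinality `2(r+1)`. -/
theorem stmt18 (F : Type*) [Field F] [Fintype F] (r q : ℕ)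
    (hr : IsPrimePow r) (hq : Fintype.card F = q) (hq2 : q = r ^ 2)
    (heven : Even q)
    (T₀ T₁ : Set {W : Submodule F (Fin 4 → F) //
        finrank F W = 1 ∧ ∀ x ∈ W, hermitianForm r x x = 0})
    (hT₀ : T₀ = {W | ∃ γ : F, γ ^ (r + 1) = 1 ∧
        W.1 = Submodule.span F {(![1, γ, 0, 0] : Fin 4 → F)}})
    (hT₁ : T₁ = {W | ∃ γ : F, γ ^ (r + 1) = 1 ∧
        W.1 = Submodule.span F {(![0, 0, 1, γ] : Fin 4 → F)}}) :
    (∀ γ : F, γ ^ (r + 1) = 1 →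
        hermitianForm r (![1, γ, 0, 0] : Fin 4 → F) ![1, γ, 0, 0] = 0 ∧
        hermitianForm r (![0, 0, 1, γ] : Fin 4 → F) ![0, 0, 1, γ] = 0) ∧
    T₀.ncard = r + 1 ∧ T₁.ncard = r + 1 ∧
    (∀ x ∈ T₀, ∀ y ∈ T₁, (unitaryPolarGraph F r).Adj x y) ∧
    (∀ x ∈ T₀, ∀ y ∈ T₀, ¬(unitaryPolarGraph F r).Adj x y) ∧
    (∀ x ∈ T₁, ∀ y ∈ T₁, ¬(unitaryPolarGraph F r).Adj x y) ∧
    (∀ u, u ∉ T₀ ∪ T₁ →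
      {x ∈ T₀ | (unitaryPolarGraph F r).Adj u x}.ncard ≤ 1 ∧
      {x ∈ T₁ | (unitaryPolarGraph F r).Adj u x}.ncard ≤ 1 ∧
      ((∃ x ∈ T₀, (unitaryPolarGraph F r).Adj u x) ↔
        (∃ x ∈ T₁, (unitaryPolarGraph F r).Adj u x))) ∧
    (∀ f : {W : Submodule F (Fin 4 → F) //
          finrank F W = 1 ∧ ∀ x ∈ W, hermitianForm r x x = 0} → ℝ,
      (∀ x ∈ T₀, f x = 1) → (∀ x ∈ T₁, f x = -1) → (∀ x, x ∉ T₀ ∪ T₁ → f x = 0) →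
      f ≠ 0 ∧
      (∀ γ, (-((r : ℝ) + 1)) * f γ = ∑ᶠ δ ∈ (unitaryPolarGraph F r).neighborSet γ, f δ) ∧
      {γ | f γ ≠ 0}.ncard = 2 * (r + 1)) := by
  subst hq
  have h : EvenHermitian F r := evenHermitian_of_card hr hq2 heven
  have e0 : T₀ = part F r false := hT₀
  have e1 : T₁ = part F r true := hT₁
  clear hT₀ hT₁
  subst e0 e1
  have c0 := ncard_part h hq2 false
  have c1 := ncard_part h hq2 true
  have a01 : ∀ x ∈ part F r false, ∀ y ∈ part F r true, (unitaryPolarGraph F r).Adj x y :=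
    fun x hx y hy => adj_parts h hx hy
  have a00 : ∀ x ∈ part F r false, ∀ y ∈ part F r false, ¬(unitaryPolarGraph F r).Adj x y :=
    fun x hx y hy => not_adj_part h hx hy
  have a11 : ∀ x ∈ part F r true, ∀ y ∈ part F r true, ¬(unitaryPolarGraph F r).Adj x y :=
    fun x hx y hy => not_adj_part h hx hy
  have hout : ∀ u, u ∉ part F r false ∪ part F r true →
      {x ∈ part F r false | (unitaryPolarGraph F r).Adj u x}.ncard ≤ 1 ∧
      {x ∈ part F r true | (unitaryPolarGraph F r).Adj u x}.ncard ≤ 1 ∧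
      ((∃ x ∈ part F r false, (unitaryPolarGraph F r).Adj u x) ↔
        (∃ x ∈ part F r true, (unitaryPolarGraph F r).Adj u x)) := by
    intro u hu
    rw [Set.mem_union, not_or] at hu
    exact ⟨Set.ncard_le_one_iff_subsingleton.mpr (subsingleton_nbrs h (s := false) hu.2),
      Set.ncard_le_one_iff_subsingleton.mpr (subsingleton_nbrs h (s := true) hu.1),
      exists_nbr_other h (s := false) hu.2, exists_nbr_other h (s := true) hu.1⟩
  refine ⟨fun γ hγ => ⟨partVec_isotropic h false hγ, partVec_isotropic h true hγ⟩,
    c0, c1, a01, a00, a11, hout, fun f f0 f1 f2 => ?_⟩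
  have := eigenfunction_of_parts (unitaryPolarGraph F r) _ _ (r + 1) (by omega) c0 c1 a01 a00 a11
    hout f f0 f1 f2
  exact_mod_cast this
end
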